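/- arXiv:2108.01038 — 7 statements merged into one kernel-verified Lean document; each statement's English description precedes it below -/
import Mathlib

section
/- Let η ≥ 0 and let ρ be a positive operator on H supported on a finite set, satisfying |d_j(ρ) − 1/r| ≤ η for every j ∈ {1,…,r}. Then there exists a positive operator ρ' on H supported on a finite set such that d_j(ρ') = 1/r for every j and |T(ρ, a) − T(ρ', a)| ≤ 2r²‖a‖·η. -/
/-! The operator `ρ` is shrunk by a factor `t ∈ [0, 1]` chosen so that `t * d_j(ρ) ≤ 1 / r` for all
`j`, and the deficits `1 / r - t * d_j(ρ)` are then filled in by a diagonal operator `σ` with one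
basis vector in each part; `ρ' = t ρ + σ`. Consequently
`T(ρ, a) - T(ρ', a) = (1 - t) T(ρ, a) - T(σ, a)`, and it remains to estimate `T` on positive
operators.

The estimate is `|T(ρ, a)| ≤ ‖a‖ tr ρ` (`abs_TT_le`): with `s = √ρ`, which is supported on the same
finite set as `ρ`, cyclicity of the trace gives `T(ρ, a) = ∑_w Re ⟪s e_w, a (s e_w)⟫`, and
`∑_w ‖s e_w‖² = tr ρ`. The error is therefore at most `‖a‖ ((1 - t) tr ρ + (1 - t tr ρ))`, and
`exists_scale` chooses `t` so that this is at most `2 r² ‖a‖ η`: for `r = 1` take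
`t = 1 / max(1, tr ρ)`, with error factor `η`; for `r ≥ 2` take `t = 1 / (1 + r η)`, with error
factor `3 r η ≤ 2 r² η`. -/

open scoped ComplexInnerProductSpace ComplexOrder

noncomputable section

/-- The Hilbert space `ℓ²(V; ℂ)`. -/
abbrev Hs (V : Type) : Type := lp (fun _ : V => ℂ) 2

/-- The standard orthonormal basis vector `e_v` of `ℓ²(V; ℂ)`. -/
def bas (V : Type) (v : V) : Hs V :=
  letI := Classical.decEq V
  lp.single 2 v 1

/-- `d_j(ρ) = ∑_{v ∈ V_j} Re ⟪e_v, ρ e_v⟫` (only finitely many nonzero terms for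
finitely-supported `ρ`). -/
def dPart {V : Type} {r : ℕ} (g : V → Fin r) (ρ : Hs V →L[ℂ] Hs V) (j : Fin r) : ℝ :=
  ∑' v : V, if g v = j then (⟪bas V v, ρ (bas V v)⟫).re else 0

/-- `T(ρ, b) = ∑_{v ∈ V} Re ⟪e_v, ρ (b e_v)⟫`, the trace of `ρ b`. -/
def TT {V : Type} (ρ b : Hs V →L[ℂ] Hs V) : ℝ :=
  ∑' v : V, (⟪bas V v, ρ (b (bas V v))⟫).re

/-- `λ_max(b) = sup { Re ⟪x, b x⟫ : ‖x‖ = 1 }`. -/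
def lamMax {V : Type} (b : Hs V →L[ℂ] Hs V) : ℝ :=
  sSup {t : ℝ | ∃ x : Hs V, ‖x‖ = 1 ∧ t = (⟪x, b x⟫).re}

lemma inner_bas {V : Type} (v : V) (x : Hs V) : ⟪bas V v, x⟫ = x v := by
  classical
  have h := lp.inner_single_left (𝕜 := ℂ) (G := fun _ : V => ℂ) v 1 x
  have e : bas V v = lp.single (E := fun _ : V => ℂ) 2 v 1 := by
    unfold bas; congr!
  rw [e, h]; simp

lemma bas_apply {V : Type} (v w : V) [Decidable (w = v)] :
    (bas V v) w = if w = v then 1 else 0 := by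
  classical
  have e : bas V v = lp.single (E := fun _ : V => ℂ) 2 v 1 := by
    unfold bas; congr!
  rw [e, lp.single_apply, Pi.single_apply]
  congr

lemma hasSum_bas {V : Type} (x : Hs V) : HasSum (fun v => ⟪bas V v, x⟫ • bas V v) x := by
  classical
  have h := lp.hasSum_single (E := fun _ : V => ℂ) (p := 2) (by simp) x
  convert h using 1
  ext v w
  simp [inner_bas, bas_apply, Pi.single_apply]

/-- A vector with coordinates vanishing off `F` is a finite combination of basis vectors. -/
lemma map_eq_sum {V : Type} (F : Finset V) (x : Hs V) (hx : ∀ v ∉ F, ⟪bas V v, x⟫ = 0)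
    (L : Hs V →L[ℂ] Hs V) : L x = ∑ v ∈ F, ⟪bas V v, x⟫ • L (bas V v) := by
  have h : x = ∑ v ∈ F, ⟪bas V v, x⟫ • bas V v :=
    (hasSum_bas x).unique (hasSum_sum_of_ne_finset_zero fun v hv => by simp [hx v hv])
  conv_lhs => rw [h]
  simp

lemma isPositive_of_nonneg {V : Type} {ρ : Hs V →L[ℂ] Hs V} (hρ : ∀ x : Hs V, 0 ≤ ⟪x, ρ x⟫) :
    ρ.IsPositive := by
  rw [ContinuousLinearMap.isPositive_iff_complex]
  intro x
  have h := Complex.nonneg_iff.1 (hρ x)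
  have e : ⟪ρ x, x⟫ = ((⟪x, ρ x⟫).re : ℂ) := by
    rw [← inner_conj_symm]
    apply Complex.ext
    · rw [Complex.conj_re, Complex.ofReal_re]
    · rw [Complex.conj_im, Complex.ofReal_im, ← h.2, neg_zero]
  rw [e]
  exact ⟨by simp, by simpa using h.1⟩

/-- The trace of an operator supported on `F`. -/
def trOn {V : Type} (F : Finset V) (ρ : Hs V →L[ℂ] Hs V) : ℝ :=
  ∑ v ∈ F, (⟪bas V v, ρ (bas V v)⟫).re

/-- By symmetry the range of `ρ` is orthogonal to `e_v` for `v ∉ F`. -/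
lemma inner_bas_eq_zero {V : Type} {F : Finset V} {ρ : Hs V →L[ℂ] Hs V} (hρ : ρ.IsPositive)
    (hF : ∀ v ∉ F, ρ (bas V v) = 0) (x : Hs V) : ∀ v ∉ F, ⟪bas V v, ρ x⟫ = 0 := by
  intro v hv
  rw [← hρ.inner_left_eq_inner_right, hF v hv, inner_zero_left]

lemma TT_eq_sum {V : Type} {F : Finset V} {ρ : Hs V →L[ℂ] Hs V} (hρ : ρ.IsPositive)
    (hF : ∀ v ∉ F, ρ (bas V v) = 0) (b : Hs V →L[ℂ] Hs V) :
    TT ρ b = ∑ v ∈ F, (⟪bas V v, ρ (b (bas V v))⟫).re :=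
  tsum_eq_sum fun v hv => by rw [inner_bas_eq_zero hρ hF _ v hv, Complex.zero_re]

lemma dPart_eq_sum {V : Type} {r : ℕ} (g : V → Fin r) {F : Finset V} {ρ : Hs V →L[ℂ] Hs V}
    (hF : ∀ v ∉ F, ρ (bas V v) = 0) (j : Fin r) :
    dPart g ρ j = ∑ v ∈ F, if g v = j then (⟪bas V v, ρ (bas V v)⟫).re else 0 :=
  tsum_eq_sum fun v hv => by simp [hF v hv]

lemma sum_dPart {V : Type} {r : ℕ} (g : V → Fin r) {F : Finset V} {ρ : Hs V →L[ℂ] Hs V}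
    (hF : ∀ v ∉ F, ρ (bas V v) = 0) : ∑ j, dPart g ρ j = trOn F ρ := by
  simp_rw [dPart_eq_sum g hF]
  rw [Finset.sum_comm]
  simp [trOn]

lemma exists_sqrt {E : Type} [NormedAddCommGroup E] [InnerProductSpace ℂ E] [CompleteSpace E]
    {ρ : E →L[ℂ] E} (hρ : ρ.IsPositive) :
    ∃ s : E →L[ℂ] E, s.IsPositive ∧ ∀ x, s (s x) = ρ x := by
  refine ⟨CFC.sqrt ρ, (ContinuousLinearMap.nonneg_iff_isPositive _).1 (CFC.sqrt_nonneg ρ), ?_⟩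
  intro x
  have h := CFC.sqrt_mul_sqrt_self ρ ((ContinuousLinearMap.nonneg_iff_isPositive ρ).2 hρ)
  exact DFunLike.congr_fun h x

/-- The trace inequality `|tr (ρ b)| ≤ ‖b‖ tr ρ` for positive `ρ`: write `ρ = s²` with
`s` positive and use cyclicity of the trace. -/
lemma abs_TT_le {V : Type} {F : Finset V} {ρ : Hs V →L[ℂ] Hs V} (hρ : ρ.IsPositive)
    (hF : ∀ v ∉ F, ρ (bas V v) = 0) (b : Hs V →L[ℂ] Hs V) :
    |TT ρ b| ≤ ‖b‖ * trOn F ρ := by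
  obtain ⟨s, hs, hss⟩ : ∃ s : Hs V →L[ℂ] Hs V, s.IsPositive ∧ ∀ x, s (s x) = ρ x :=
    exists_sqrt hρ
  have sym : ∀ x y, ⟪s x, y⟫ = ⟪x, s y⟫ := hs.inner_left_eq_inner_right
  have nrm : ∀ x, (⟪x, ρ x⟫).re = ‖s x‖ ^ 2 := by
    intro x
    rw [← hss, ← sym, inner_self_eq_norm_sq_to_K]
    norm_cast
  have hsF : ∀ v ∉ F, s (bas V v) = 0 := by
    intro v hv
    have h := nrm (bas V v)
    rw [hF v hv, inner_zero_right, Complex.zero_re] at h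
    exact norm_eq_zero.1 (pow_eq_zero_iff two_ne_zero |>.1 h.symm)
  have hz : ∀ x, ∀ v ∉ F, ⟪bas V v, s x⟫ = 0 := inner_bas_eq_zero hs hsF
  have key : ∑ v ∈ F, ⟪bas V v, ρ (b (bas V v))⟫
      = ∑ w ∈ F, ⟪s (bas V w), b (s (bas V w))⟫ := by
    have h1 : ∀ v, ⟪bas V v, ρ (b (bas V v))⟫
        = ∑ w ∈ F, ⟪bas V v, s (bas V w)⟫ * ⟪s (bas V w), b (bas V v)⟫ := by
      intro v
      rw [← hss, map_eq_sum F (s (b (bas V v))) (hz _) s, inner_sum]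
      refine Finset.sum_congr rfl fun w _ => ?_
      rw [inner_smul_right, sym (bas V w), mul_comm]
    have h2 : ∀ w, ⟪s (bas V w), b (s (bas V w))⟫
        = ∑ v ∈ F, ⟪bas V v, s (bas V w)⟫ * ⟪s (bas V w), b (bas V v)⟫ := by
      intro w
      rw [map_eq_sum F (s (bas V w)) (hz _) b, inner_sum]
      exact Finset.sum_congr rfl fun v _ => inner_smul_right _ _ _
    simp_rw [h1, h2]
    exact Finset.sum_comm
  rw [TT_eq_sum hρ hF, ← Complex.re_sum, key, Complex.re_sum, trOn, Finset.mul_sum]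
  refine (Finset.abs_sum_le_sum_abs _ _).trans (Finset.sum_le_sum fun w _ => ?_)
  rw [nrm]
  calc |(⟪s (bas V w), b (s (bas V w))⟫).re| ≤ ‖⟪s (bas V w), b (s (bas V w))⟫‖ :=
        Complex.abs_re_le_norm _
    _ ≤ ‖s (bas V w)‖ * ‖b (s (bas V w))‖ := norm_inner_le_norm _ _
    _ ≤ ‖s (bas V w)‖ * (‖b‖ * ‖s (bas V w)‖) := by gcongr; exact b.le_opNorm _
    _ = ‖b‖ * ‖s (bas V w)‖ ^ 2 := by ring

/-- The scaling factor `t`, chosen so that `(1 - t) ∑ d + (1 - t ∑ d)`, the total mass removed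
and put back, is at most `2 r² η`. -/
lemma exists_scale (r : ℕ) (hr : 1 ≤ r) (d : Fin r → ℝ) (η : ℝ) (hη : 0 ≤ η)
    (hd : ∀ j, |d j - 1 / (r : ℝ)| ≤ η) :
    ∃ t : ℝ, 0 ≤ t ∧ t ≤ 1 ∧ (∀ j, t * d j ≤ 1 / (r : ℝ)) ∧
      (1 - t) * ∑ j, d j + (1 - t * ∑ j, d j) ≤ 2 * (r : ℝ) ^ 2 * η := by
  rcases hr.eq_or_lt with rfl | hr2
  · have h := abs_le.1 (hd 0)
    simp only [Nat.cast_one, div_one] at h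
    by_cases hc : d 0 ≤ 1
    · refine ⟨1, by norm_num, le_rfl, fun j => ?_, ?_⟩
      · rw [Subsingleton.elim j 0]; simpa using hc
      · simp; linarith
    · push Not at hc
      have h0 : (0 : ℝ) < d 0 := by linarith
      refine ⟨(d 0)⁻¹, by positivity, inv_le_one_of_one_le₀ hc.le, fun j => ?_, ?_⟩
      · rw [Subsingleton.elim j 0, inv_mul_cancel₀ h0.ne']; simp
      · simp [sub_mul, inv_mul_cancel₀ h0.ne']; linarith
  · have hr2' : (2 : ℝ) ≤ r := by exact_mod_cast hr2
    have hr0 : (0 : ℝ) < r := by linarith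
    set M : ℝ := 1 + r * η with hM
    have hM1 : 1 ≤ M := by have := mul_nonneg hr0.le hη; linarith
    have hM0 : 0 < M := by linarith
    have hup : ∀ j, d j ≤ M / r := by
      intro j
      have := (abs_le.1 (hd j)).2
      have e : M / r = 1 / r + η := by rw [hM]; field_simp
      linarith
    have hlo : ∀ j, 1 / (r : ℝ) - η ≤ d j := fun j => by linarith [(abs_le.1 (hd j)).1]
    have hS1 : ∑ j, d j ≤ M := by
      calc ∑ j, d j ≤ ∑ _j : Fin r, M / r := Finset.sum_le_sum fun j _ => hup j
        _ = M := by simp; field_simp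
    have hS2 : 1 - r * η ≤ ∑ j, d j := by
      calc 1 - r * η = ∑ _j : Fin r, (1 / (r : ℝ) - η) := by simp [hr0.ne']
        _ ≤ ∑ j, d j := Finset.sum_le_sum fun j _ => hlo j
    set S := ∑ j, d j
    have ht1 : M⁻¹ ≤ 1 := inv_le_one_of_one_le₀ hM1
    refine ⟨M⁻¹, by positivity, ht1, fun j => ?_, ?_⟩
    · calc M⁻¹ * d j ≤ M⁻¹ * (M / r) := by gcongr; exact hup j
        _ = 1 / r := by field_simp
    · have h1 : (1 - M⁻¹) * S ≤ (1 - M⁻¹) * M :=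
        mul_le_mul_of_nonneg_left hS1 (by linarith)
      have h2 : (1 - M⁻¹) * M = r * η := by
        rw [sub_mul, inv_mul_cancel₀ hM0.ne', hM]; ring
      -- The left-hand side is `2 (1 - t) S + (1 - S) ≤ 2 r η + r η`.
      have h3 : 2 * (r * η) ≤ (r : ℝ) ^ 2 * η := by
        have := mul_nonneg hr0.le hη
        nlinarith
      have : 0 ≤ (r : ℝ) * η := mul_nonneg hr0.le hη
      nlinarith

/-- The diagonal operator `∑ c_j |e_{f j}⟩⟨e_{f j}|`. -/
def diagOp {V : Type} {r : ℕ} (f : Fin r → V) (c : Fin r → ℝ) : Hs V →L[ℂ] Hs V :=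
  ∑ j, (c j : ℂ) • InnerProductSpace.rankOne ℂ (bas V (f j)) (bas V (f j))

lemma diagOp_isPositive {V : Type} {r : ℕ} (f : Fin r → V) {c : Fin r → ℝ} (hc : ∀ j, 0 ≤ c j) :
    (diagOp f c).IsPositive :=
  ContinuousLinearMap.isPositive_sum _ fun j _ =>
    (InnerProductSpace.isPositive_rankOne_self _).smul_of_nonneg (by exact_mod_cast hc j)

lemma diagOp_bas {V : Type} [DecidableEq V] {r : ℕ} (f : Fin r → V) (c : Fin r → ℝ) (v : V) :
    diagOp f c (bas V v) = ∑ j, if f j = v then (c j : ℂ) • bas V v else 0 := by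
  simp only [diagOp, sum_apply, smul_apply,
    InnerProductSpace.rankOne_apply, inner_bas]
  refine Finset.sum_congr rfl fun j _ => ?_
  rw [bas_apply]
  split_ifs with h <;> simp [h]

lemma diagOp_supp {V : Type} [DecidableEq V] {r : ℕ} (f : Fin r → V) (c : Fin r → ℝ) :
    ∀ v ∉ Finset.univ.image f, diagOp f c (bas V v) = 0 := by
  intro v hv
  rw [diagOp_bas]
  refine Finset.sum_eq_zero fun j _ => if_neg fun h => hv ?_
  exact Finset.mem_image.2 ⟨j, Finset.mem_univ _, h⟩

lemma dPart_diagOp {V : Type} {r : ℕ} (g : V → Fin r) (f : Fin r → V) (hf : ∀ j, g (f j) = j)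
    (c : Fin r → ℝ) (j : Fin r) : dPart g (diagOp f c) j = c j := by
  classical
  have hinj : Function.Injective f := Function.LeftInverse.injective hf
  rw [dPart_eq_sum g (diagOp_supp f c), Finset.sum_image hinj.injOn]
  simp only [hf, Finset.sum_ite_eq', Finset.mem_univ, if_true, diagOp_bas, hinj.eq_iff]
  rw [inner_smul_right, inner_bas, bas_apply]
  simp

/-- A near-feasible finitely-supported positive solution can be corrected to an exactly
feasible one, changing the objective by at most `2r²‖a‖η`. -/
theorem stmt3 (r : ℕ) (hr : 1 ≤ r) (V : Type) [Countable V] [Nonempty V]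
    (g : V → Fin r) (hg : ∀ j : Fin r, ∃ v : V, g v = j)
    (a : Hs V →L[ℂ] Hs V) (ha : IsSelfAdjoint a)
    (η : ℝ) (hη : 0 ≤ η)
    (ρ : Hs V →L[ℂ] Hs V) (hρ : ∀ x : Hs V, 0 ≤ ⟪x, ρ x⟫)
    (F : Finset V) (hsupp : ∀ v ∉ F, ρ (bas V v) = 0)
    (hd : ∀ j : Fin r, |dPart g ρ j - 1 / (r : ℝ)| ≤ η) :
    ∃ (ρ' : Hs V →L[ℂ] Hs V) (F' : Finset V),
      (∀ x : Hs V, 0 ≤ ⟪x, ρ' x⟫) ∧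
      (∀ v ∉ F', ρ' (bas V v) = 0) ∧
      (∀ j : Fin r, dPart g ρ' j = 1 / (r : ℝ)) ∧
      |TT ρ a - TT ρ' a| ≤ 2 * (r : ℝ) ^ 2 * ‖a‖ * η := by
  classical
  choose f hf using hg
  obtain ⟨t, ht0, ht1, htd, hbound⟩ := exists_scale r hr (dPart g ρ) η hη hd
  have hρp := isPositive_of_nonneg hρ
  set c : Fin r → ℝ := fun j => 1 / (r : ℝ) - t * dPart g ρ j with hc
  have hc0 : ∀ j, 0 ≤ c j := fun j => sub_nonneg.2 (htd j)
  set σ := diagOp f c with hσ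
  have hσp : σ.IsPositive := diagOp_isPositive f hc0
  set F' : Finset V := F ∪ Finset.univ.image f
  have hρF : ∀ v ∉ F', ρ (bas V v) = 0 := fun v hv =>
    hsupp v fun h => hv (Finset.mem_union_left _ h)
  have hσF : ∀ v ∉ F', σ (bas V v) = 0 := fun v hv =>
    diagOp_supp f c v fun h => hv (Finset.mem_union_right _ h)
  have hp : ((t : ℂ) • ρ + σ).IsPositive :=
    (hρp.smul_of_nonneg (by exact_mod_cast ht0)).add hσp
  have hF : ∀ v ∉ F', ((t : ℂ) • ρ + σ) (bas V v) = 0 := fun v hv => by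
    rw [add_apply, smul_apply, hρF v hv, hσF v hv, smul_zero, add_zero]
  refine ⟨(t : ℂ) • ρ + σ, F', hp.inner_nonneg_right, hF, fun j => ?_, ?_⟩
  · have h : dPart g ((t : ℂ) • ρ + σ) j = t * dPart g ρ j + dPart g σ j := by
      rw [dPart_eq_sum g hF, dPart_eq_sum g hρF, dPart_eq_sum g hσF, Finset.mul_sum,
        ← Finset.sum_add_distrib]
      refine Finset.sum_congr rfl fun v _ => ?_
      rw [add_apply, smul_apply, inner_add_right, inner_smul_right]
      split_ifs <;> simp
    rw [h, hσ, dPart_diagOp g f hf, hc]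
    ring
  · have h : TT ((t : ℂ) • ρ + σ) a = t * TT ρ a + TT σ a := by
      rw [TT_eq_sum hp hF, TT_eq_sum hρp hρF, TT_eq_sum hσp hσF, Finset.mul_sum,
        ← Finset.sum_add_distrib]
      refine Finset.sum_congr rfl fun v _ => ?_
      rw [add_apply, smul_apply, inner_add_right, inner_smul_right]
      simp
    have h1 := abs_TT_le hρp hρF a
    have h2 := abs_TT_le hσp hσF a
    rw [← sum_dPart g hρF] at h1
    have hr0 : (r : ℝ) ≠ 0 := by positivity
    have hσtr : trOn F' σ = 1 - t * ∑ j, dPart g ρ j := by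
      rw [← sum_dPart g hσF]
      simp_rw [hσ, dPart_diagOp g f hf, hc, Finset.sum_sub_distrib, Finset.mul_sum]
      simp [hr0]
    rw [hσtr] at h2
    rw [h, show TT ρ a - (t * TT ρ a + TT σ a) = (1 - t) * TT ρ a - TT σ a by ring]
    calc |(1 - t) * TT ρ a - TT σ a| ≤ |(1 - t) * TT ρ a| + |TT σ a| := abs_sub _ _
      _ = (1 - t) * |TT ρ a| + |TT σ a| := by rw [abs_mul, abs_of_nonneg (sub_nonneg.2 ht1)]
      _ ≤ (1 - t) * (‖a‖ * ∑ j, dPart g ρ j) + ‖a‖ * (1 - t * ∑ j, dPart g ρ j) := by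
        have := sub_nonneg.2 ht1
        gcongr
      _ = ‖a‖ * ((1 - t) * ∑ j, dPart g ρ j + (1 - t * ∑ j, dPart g ρ j)) := by ring
      _ ≤ ‖a‖ * (2 * (r : ℝ) ^ 2 * η) := by gcongr
      _ = 2 * (r : ℝ) ^ 2 * ‖a‖ * η := by ring
end
end

section
/- For every ε > 0 there exists a positive operator ρ on H supported on a finite set such that d_j(ρ) = 1/r for every j ∈ {1,…,r} and T(ρ, a) ≥ inf{λ_max(a + ζ_1 I_1 + ⋯ + ζ_r I_r) : ζ ∈ ℝ^r, ζ_1 + ⋯ + ζ_r = 0} − ε. (The set over which the infimum is taken is nonempty, containing ζ = 0, and is bounded below by −‖a‖, so the infimum is a finite real number.) -/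
/-!
Strong duality for the semidefinite programme: maximise `T(ρ, a)` over positive finitely supported
`ρ` with all part traces equal to `1 / r`. Finitely many linear functionals of `ρ` are involved, so
the duality is a separation argument in `ℝ^r × ℝ`.

Put `c = a + ‖a‖ ≥ 0`. The set of `(u, s)` for which some admissible `ρ` has `d_j(ρ) < u_j` and
`s < T(ρ, c)` is open and convex. If it contains `(1/r, …, 1/r, M - ε + ‖a‖)`, where `M` is the
infimum, then filling the deficits `1/r - d_j(ρ)` with diagonal mass gives the required operator,
since positivity of `c` means this does not decrease `T(·, c)`. If not, Hahn–Banach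
(`feasible_or_dual`) gives multipliers `y` with `c + ∑ y_j I_j ≤ 0` as a quadratic form on finitely
supported vectors, hence on all vectors by density (`re_inner_nonpos_of_TT`). Subtracting from `y`
its mean yields `ζ` of sum zero with `λ_max(a + ∑ ζ_j I_j) ≤ M - ε`, contradicting the definition
of `M`; here the infimum is a genuine one by `bddBelow_dual`.

Both `d_j(ρ) = T(ρ, I_j)` (`dPart_eq_TT`) and the quadratic form `Re ⟪x, b x⟫ = T(|x⟩⟨x|, b)`
(`TT_proj`) are values of `TT`, so only the bilinearity of `TT` is needed.
-/
open scoped ComplexInnerProductSpace ComplexOrder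

noncomputable section

/-! ### The standard basis of `ℓ²(V; ℂ)` -/

/-- The vectors `bas V v` form a Hilbert basis of `ℓ²(V; ℂ)`. -/
def hbas (V : Type) : HilbertBasis V ℂ (Hs V) :=
  HilbertBasis.ofRepr (LinearIsometryEquiv.refl ℂ (Hs V))

lemma hbas_apply (V : Type) (v : V) : hbas V v = bas V v := by
  classical
  rw [← HilbertBasis.repr_symm_single]
  unfold bas
  convert! rfl

lemma norm_bas {V : Type} (v : V) : ‖bas V v‖ = 1 := by
  rw [← hbas_apply]; exact (hbas V).orthonormal.1 v

lemma inner_bas_of_ne {V : Type} {v w : V} (h : v ≠ w) : ⟪bas V v, bas V w⟫ = 0 := by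
  rw [← hbas_apply, ← hbas_apply]; exact (hbas V).orthonormal.2 h

lemma dense_span_bas (V : Type) :
    Dense (Submodule.span ℂ (Set.range (bas V)) : Set (Hs V)) := by
  have h := (hbas V).dense_span
  rw [show (hbas V : V → Hs V) = bas V from funext (hbas_apply V)] at h
  exact Submodule.dense_iff_topologicalClosure_eq_top.2 h

/-! ### Positive finitely supported operators and the trace pairing -/

/-- Positive operators supported on a finite set of basis vectors. -/
def FS {V : Type} (ρ : Hs V →L[ℂ] Hs V) : Prop :=
  ρ.IsPositive ∧ ∃ F : Finset V, ∀ v ∉ F, ρ (bas V v) = 0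

lemma FS.zero {V : Type} : FS (0 : Hs V →L[ℂ] Hs V) :=
  ⟨ContinuousLinearMap.isPositive_zero, ∅, fun _ _ => rfl⟩

lemma FS.add {V : Type} {ρ σ : Hs V →L[ℂ] Hs V} (hρ : FS ρ) (hσ : FS σ) : FS (ρ + σ) := by
  classical
  obtain ⟨h1, F, hF⟩ := hρ
  obtain ⟨h2, G, hG⟩ := hσ
  refine ⟨h1.add h2, F ∪ G, fun v hv => ?_⟩
  rw [Finset.mem_union, not_or] at hv
  simp [hF v hv.1, hG v hv.2]

lemma FS.smul {V : Type} {ρ : Hs V →L[ℂ] Hs V} (hρ : FS ρ) {t : ℝ} (ht : 0 ≤ t) :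
    FS ((t : ℂ) • ρ) := by
  obtain ⟨h1, F, hF⟩ := hρ
  refine ⟨h1.smul_of_nonneg (by exact_mod_cast ht), F, fun v hv => ?_⟩
  rw [smul_apply, hF v hv, smul_zero]

lemma FS.sum {V ι : Type} (s : Finset ι) {ρ : ι → (Hs V →L[ℂ] Hs V)} (h : ∀ i, FS (ρ i)) :
    FS (∑ i ∈ s, ρ i) := by
  classical
  induction s using Finset.induction_on with
  | empty => simpa using FS.zero
  | insert i s hi ih => rw [Finset.sum_insert hi]; exact (h i).add ih

/-- Self-adjointness of `ρ` moves it to the left slot, so that only the basis vectors in the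
support of `ρ` contribute to `TT ρ b`. -/
lemma FS.summable {V : Type} {ρ : Hs V →L[ℂ] Hs V} (hρ : FS ρ) (b : Hs V →L[ℂ] Hs V) :
    Summable fun v => (⟪bas V v, ρ (b (bas V v))⟫).re := by
  obtain ⟨h1, F, hF⟩ := hρ
  refine summable_of_ne_finset_zero (s := F) fun v hv => ?_
  rw [← h1.inner_left_eq_inner_right, hF v hv]
  simp

lemma TT_add_left {V : Type} {ρ σ : Hs V →L[ℂ] Hs V} (hρ : FS ρ) (hσ : FS σ)
    (b : Hs V →L[ℂ] Hs V) : TT (ρ + σ) b = TT ρ b + TT σ b := by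
  unfold TT
  rw [← (hρ.summable b).tsum_add (hσ.summable b)]
  simp

lemma TT_smul_left {V : Type} (t : ℝ) (ρ b : Hs V →L[ℂ] Hs V) :
    TT ((t : ℂ) • ρ) b = t * TT ρ b := by
  unfold TT
  rw [← tsum_mul_left]
  simp only [smul_apply, inner_smul_right, Complex.re_ofReal_mul]

lemma TT_zero_left {V : Type} (b : Hs V →L[ℂ] Hs V) : TT 0 b = 0 := by
  simp [TT]

lemma TT_sum_left {V ι : Type} (s : Finset ι) {ρ : ι → (Hs V →L[ℂ] Hs V)} (h : ∀ i, FS (ρ i))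
    (b : Hs V →L[ℂ] Hs V) : TT (∑ i ∈ s, ρ i) b = ∑ i ∈ s, TT (ρ i) b := by
  classical
  induction s using Finset.induction_on with
  | empty => simpa using TT_zero_left b
  | insert i s hi ih =>
    rw [Finset.sum_insert hi, Finset.sum_insert hi, TT_add_left (h i) (FS.sum s h), ih]

lemma TT_add_right {V : Type} {ρ : Hs V →L[ℂ] Hs V} (hρ : FS ρ)
    (b c : Hs V →L[ℂ] Hs V) : TT ρ (b + c) = TT ρ b + TT ρ c := by
  unfold TT
  rw [← (hρ.summable b).tsum_add (hρ.summable c)]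
  simp

lemma TT_smul_right {V : Type} (t : ℝ) (ρ b : Hs V →L[ℂ] Hs V) :
    TT ρ ((t : ℂ) • b) = t * TT ρ b := by
  unfold TT
  rw [← tsum_mul_left]
  simp only [smul_apply, map_smul, inner_smul_right, Complex.re_ofReal_mul]

lemma TT_sum_right {V ι : Type} (s : Finset ι) {ρ : Hs V →L[ℂ] Hs V} (hρ : FS ρ)
    (b : ι → (Hs V →L[ℂ] Hs V)) : TT ρ (∑ i ∈ s, b i) = ∑ i ∈ s, TT ρ (b i) := by
  classical
  induction s using Finset.induction_on with
  | empty => simp [TT]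
  | insert i s hi ih =>
    rw [Finset.sum_insert hi, Finset.sum_insert hi, TT_add_right hρ, ih]

/-! ### Rank-one operators -/

/-- The rank-one operator `|x⟩⟨x|`. -/
def proj {V : Type} (x : Hs V) : Hs V →L[ℂ] Hs V := InnerProductSpace.rankOne ℂ x x

/-- Parseval: the trace pairing of `|x⟩⟨x|` with `b` is `Re ⟪x, b x⟫`. -/
lemma TT_proj {V : Type} (x : Hs V) (b : Hs V →L[ℂ] Hs V) :
    TT (proj x) b = (⟪x, b x⟫).re := by
  have h := (hbas V).hasSum_inner_mul_inner (ContinuousLinearMap.adjoint b x) x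
  simp only [hbas_apply, ContinuousLinearMap.adjoint_inner_left] at h
  have h2 := Complex.hasSum_re h
  rw [← h2.tsum_eq]
  unfold TT proj
  simp only [InnerProductSpace.rankOne_apply, inner_smul_right]

lemma FS_proj {V : Type} {x : Hs V} (hx : x ∈ Submodule.span ℂ (Set.range (bas V))) :
    FS (proj x) := by
  classical
  refine ⟨InnerProductSpace.isPositive_rankOne_self x, ?_⟩
  suffices h : ∃ F : Finset V, ∀ v ∉ F, ⟪x, bas V v⟫ = 0 by
    obtain ⟨F, hF⟩ := h
    exact ⟨F, fun v hv => by simp [proj, hF v hv]⟩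
  induction hx using Submodule.span_induction with
  | mem x hx =>
    obtain ⟨w, rfl⟩ := hx
    refine ⟨{w}, fun v hv => inner_bas_of_ne ?_⟩
    rintro rfl; simp at hv
  | zero => exact ⟨∅, by simp⟩
  | add x y _ _ hx hy =>
    obtain ⟨F, hF⟩ := hx
    obtain ⟨G, hG⟩ := hy
    refine ⟨F ∪ G, fun v hv => ?_⟩
    rw [Finset.mem_union, not_or] at hv
    simp [hF v hv.1, hG v hv.2]
  | smul t x _ hx =>
    obtain ⟨F, hF⟩ := hx
    exact ⟨F, fun v hv => by simp [hF v hv]⟩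

/-- Rank-one test operators at vectors of finite support control the quadratic form on a dense
set, hence everywhere. -/
lemma re_inner_nonpos_of_TT {V : Type} (b : Hs V →L[ℂ] Hs V)
    (h : ∀ ρ, FS ρ → TT ρ b ≤ 0) (x : Hs V) : (⟪x, b x⟫).re ≤ 0 := by
  have hc : IsClosed {x : Hs V | (⟪x, b x⟫).re ≤ 0} := by
    refine isClosed_le ?_ continuous_const
    exact Complex.continuous_re.comp (continuous_id.inner b.continuous)
  have := hc.closure_subset_iff.2
    (fun x hx => (by simpa [TT_proj] using h _ (FS_proj hx) :
      x ∈ {x : Hs V | (⟪x, b x⟫).re ≤ 0})) (dense_span_bas V x)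
  exact this

/-! ### Separation -/

lemma nonpos_of_forall_mul_add_lt {A B C : ℝ} (h : ∀ t : ℝ, 0 ≤ t → t * A + B < C) : A ≤ 0 := by
  by_contra! hA
  have h0 := h 0 le_rfl
  have h1 := h ((C - B) / A) (by apply div_nonneg <;> linarith)
  rw [div_mul_cancel₀ _ hA.ne'] at h1
  linarith

lemma nonneg_of_forall_mul_lt {B C : ℝ} (h : ∀ t : ℝ, 0 < t → t * B < C) : 0 ≤ C := by
  by_contra! hC
  rcases le_or_gt 0 B with hB | hB
  · have := h 1 one_pos
    linarith
  · have := h (C / B) (div_pos_of_neg_of_neg hC hB)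
    rw [div_mul_cancel₀ _ hB.ne] at this
    linarith

lemma convex_comb_lt {α β x y u w : ℝ} (hα : 0 ≤ α) (hβ : 0 ≤ β) (h : α + β = 1)
    (hx : x < u) (hy : y < w) : α * x + β * y < α * u + β * w := by
  have := convex_Ioi (0 : ℝ) (sub_pos.2 hx) (sub_pos.2 hy) hα hβ h
  simp only [smul_eq_mul, Set.mem_Ioi] at this
  linarith

/-- Theorem of alternatives: either the strict constraints `TT ρ (I j) < p j`, `q < TT ρ c` are
solvable by a positive finitely supported `ρ`, or there are dual multipliers `y` certifying the
contrary. The multiplier of `c` is nonzero because every `p j` is positive (a Slater condition),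
and is normalised to `1`. -/
lemma feasible_or_dual {V : Type} {r : ℕ} (c : Hs V →L[ℂ] Hs V) (I : Fin r → (Hs V →L[ℂ] Hs V))
    (p : Fin r → ℝ) (hp : ∀ j, 0 < p j) (q : ℝ) :
    (∃ ρ, FS ρ ∧ (∀ j, TT ρ (I j) < p j) ∧ q < TT ρ c) ∨
    ∃ y : Fin r → ℝ, 0 ≤ ∑ j, y j * p j + q ∧
      ∀ ρ, FS ρ → ∑ j, y j * TT ρ (I j) + TT ρ c ≤ 0 := by
  classical
  refine or_iff_not_imp_left.2 fun hno => ?_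
  let O : Set ((Fin r → ℝ) × ℝ) :=
    {u | ∃ ρ, FS ρ ∧ (∀ j, TT ρ (I j) < u.1 j) ∧ u.2 < TT ρ c}
  have hOc : Convex ℝ O := by
    rintro u ⟨ρ, hρ, h1, h2⟩ w ⟨σ, hσ, k1, k2⟩ α β hα hβ hαβ
    refine ⟨(α : ℂ) • ρ + (β : ℂ) • σ, (hρ.smul hα).add (hσ.smul hβ), fun j => ?_, ?_⟩
    · rw [TT_add_left (hρ.smul hα) (hσ.smul hβ), TT_smul_left, TT_smul_left]
      exact convex_comb_lt hα hβ hαβ (h1 j) (k1 j)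
    · rw [TT_add_left (hρ.smul hα) (hσ.smul hβ), TT_smul_left, TT_smul_left]
      exact convex_comb_lt hα hβ hαβ h2 k2
  have hOo : IsOpen O := by
    have : O = ⋃ ρ ∈ {ρ : Hs V →L[ℂ] Hs V | FS ρ},
        {u : (Fin r → ℝ) × ℝ | (∀ j, TT ρ (I j) < u.1 j) ∧ u.2 < TT ρ c} := by
      ext u; simp [O, and_left_comm]
    rw [this]
    refine isOpen_biUnion fun ρ _ => IsOpen.and ?_ (isOpen_lt continuous_snd continuous_const)
    rw [Set.ofPred_forall]
    exact isOpen_iInter_of_finite fun j =>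
      isOpen_lt continuous_const ((continuous_apply j).comp continuous_fst)
  have hpO : (p, q) ∉ O := hno
  obtain ⟨f, hf⟩ := geometric_hahn_banach_open_point hOc hOo hpO
  let Y : Fin r → ℝ := fun j => f (Pi.single j 1, 0)
  let z : ℝ := f (0, 1)
  have hfe : ∀ u s, f (u, s) = ∑ j, Y j * u j + z * s := by
    intro u s
    have e : (u, s) = ∑ j, u j • ((Pi.single j 1, 0) : (Fin r → ℝ) × ℝ) +
        s • ((0, 1) : (Fin r → ℝ) × ℝ) := by
      refine Prod.ext ?_ ?_
      · funext i
        simp [Prod.fst_sum, Finset.sum_apply, Pi.single_apply]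
      · simp [Prod.snd_sum]
    rw [e, map_add, map_sum]
    simp only [map_smul, smul_eq_mul, Y, z]
    simp only [mul_comm]
  -- `(p, s)` lies in `O` for every negative `s`, by taking `ρ = 0`; this forces `z > 0`.
  have hz : 0 < z := by
    have h := hf (p, -(|q| + 1)) ⟨0, FS.zero, fun j => by rw [TT_zero_left]; exact hp j, by
      rw [TT_zero_left]; have := abs_nonneg q; dsimp only; linarith⟩
    rw [hfe, hfe] at h
    have h2 : 0 < q + (|q| + 1) := by have := neg_abs_le q; linarith
    by_contra! hz
    nlinarith
  have hcone : ∀ ρ, FS ρ → ∑ j, Y j * TT ρ (I j) + z * TT ρ c ≤ 0 := by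
    intro ρ hρ
    apply nonpos_of_forall_mul_add_lt (B := f (fun _ => 1, -1)) (C := f (p, q))
    intro t ht
    have h := hf (t • (fun j => TT ρ (I j), TT ρ c) + (fun _ => 1, -1))
      ⟨(t : ℂ) • ρ, hρ.smul ht, fun j => by rw [TT_smul_left]; simp, by
        rw [TT_smul_left]; simp⟩
    rw [map_add, map_smul, hfe (fun j => TT ρ (I j)), smul_eq_mul] at h
    exact h
  have hnn : 0 ≤ ∑ j, Y j * p j + z * q := by
    rw [← hfe]
    apply nonneg_of_forall_mul_lt (B := f (fun _ => 1, -1))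
    intro t ht
    have h := hf (t • (fun _ => 1, -1))
      ⟨0, FS.zero, fun j => by rw [TT_zero_left]; simpa using ht, by
        rw [TT_zero_left]; simpa using ht⟩
    rwa [map_smul, smul_eq_mul] at h
  have hdiv : ∀ (w : Fin r → ℝ) (s : ℝ),
      ∑ j, Y j / z * w j + s = z⁻¹ * (∑ j, Y j * w j + z * s) := by
    intro w s
    rw [mul_add, Finset.mul_sum, inv_mul_cancel_left₀ hz.ne']
    congr 1
    exact Finset.sum_congr rfl fun j _ => by ring
  refine ⟨fun j => Y j / z, ?_, fun ρ hρ => ?_⟩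
  · rw [hdiv]
    exact mul_nonneg (inv_nonneg.2 hz.le) hnn
  · rw [hdiv]
    exact mul_nonpos_of_nonneg_of_nonpos (inv_nonneg.2 hz.le) (hcone ρ hρ)

/-! ### Numerical range, part projections, boundedness of the dual -/

lemma abs_re_inner_le {V : Type} (b : Hs V →L[ℂ] Hs V) {x : Hs V} (hx : ‖x‖ = 1) :
    |(⟪x, b x⟫).re| ≤ ‖b‖ := by
  calc |(⟪x, b x⟫).re| ≤ ‖⟪x, b x⟫‖ := Complex.abs_re_le_norm _
    _ ≤ ‖x‖ * ‖b x‖ := norm_inner_le_norm _ _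
    _ ≤ ‖x‖ * (‖b‖ * ‖x‖) := by gcongr; exact b.le_opNorm x
    _ = ‖b‖ := by rw [hx]; ring

lemma le_lamMax {V : Type} (b : Hs V →L[ℂ] Hs V) {x : Hs V} (hx : ‖x‖ = 1) :
    (⟪x, b x⟫).re ≤ lamMax b := by
  refine le_csSup ⟨‖b‖, ?_⟩ ⟨x, hx, rfl⟩
  rintro t ⟨x, hx, rfl⟩
  exact (abs_le.1 (abs_re_inner_le b hx)).2

lemma dPart_eq_TT {V : Type} {r : ℕ} {g : V → Fin r} {I : Fin r → (Hs V →L[ℂ] Hs V)}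
    (hI : ∀ (j : Fin r) (v : V), I j (bas V v) = if g v = j then bas V v else 0)
    (ρ : Hs V →L[ℂ] Hs V) (j : Fin r) : dPart g ρ j = TT ρ (I j) := by
  unfold dPart TT
  refine tsum_congr fun v => ?_
  rw [hI]
  split_ifs <;> simp

lemma sum_I_eq_one {V : Type} {r : ℕ} {g : V → Fin r} {I : Fin r → (Hs V →L[ℂ] Hs V)}
    (hI : ∀ (j : Fin r) (v : V), I j (bas V v) = if g v = j then bas V v else 0) :
    ∑ j, I j = 1 := by
  refine ContinuousLinearMap.ext_on (dense_span_bas V) ?_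
  rintro _ ⟨v, rfl⟩
  simp [hI]

lemma re_inner_add_sum {V : Type} {r : ℕ} (a : Hs V →L[ℂ] Hs V) (I : Fin r → (Hs V →L[ℂ] Hs V))
    (ζ : Fin r → ℝ) (x : Hs V) :
    (⟪x, (a + ∑ j, (ζ j : ℂ) • I j) x⟫).re = (⟪x, a x⟫).re + ∑ j, ζ j * (⟪x, I j x⟫).re := by
  simp only [add_apply, sum_apply, smul_apply, inner_add_right, inner_sum, inner_smul_right,
    Complex.add_re, Complex.re_sum, Complex.re_ofReal_mul]

/-- The infimum in the duality formula is taken over a set bounded below: one representative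
`v_j` of each part gives `∑ j, ⟪e_{v_j}, (a + ∑ k, ζ k • I k) e_{v_j}⟫ ≥ -r ‖a‖`. -/
lemma bddBelow_dual {V : Type} {r : ℕ} (hr : 1 ≤ r) {g : V → Fin r}
    (hg : ∀ j : Fin r, ∃ v : V, g v = j) (a : Hs V →L[ℂ] Hs V)
    {I : Fin r → (Hs V →L[ℂ] Hs V)}
    (hI : ∀ (j : Fin r) (v : V), I j (bas V v) = if g v = j then bas V v else 0) :
    BddBelow {t : ℝ | ∃ ζ : Fin r → ℝ, (∑ j : Fin r, ζ j = 0) ∧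
          t = lamMax (a + ∑ j : Fin r, (ζ j : ℂ) • I j)} := by
  refine ⟨-‖a‖, ?_⟩
  rintro t ⟨ζ, hζ, rfl⟩
  choose w hw using hg
  have hI' : ∀ j k, (⟪bas V (w j), I k (bas V (w j))⟫).re = if j = k then 1 else 0 := by
    intro j k
    rw [hI, hw]
    split_ifs <;> simp [norm_bas]
  have key : ∀ j, -‖a‖ + ζ j ≤ lamMax (a + ∑ j : Fin r, (ζ j : ℂ) • I j) := by
    intro j
    have h := le_lamMax (a + ∑ j : Fin r, (ζ j : ℂ) • I j) (norm_bas (w j))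
    rw [re_inner_add_sum] at h
    simp only [hI', mul_ite, mul_one, mul_zero, Finset.sum_ite_eq, Finset.mem_univ,
      if_true] at h
    have := (abs_le.1 (abs_re_inner_le a (norm_bas (w j)))).1
    linarith
  have hs := Finset.sum_le_sum fun j (_ : j ∈ Finset.univ) => key j
  rw [Finset.sum_add_distrib, hζ] at hs
  simp only [Finset.sum_const, Finset.card_univ, Fintype.card_fin, nsmul_eq_mul, add_zero] at hs
  have : (0 : ℝ) < r := by exact_mod_cast hr
  exact le_of_mul_le_mul_left hs this

/-! ### Strong duality -/

/-- Near-optimal feasible finitely-supported primal solutions exist. -/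
theorem stmt6 (r : ℕ) (hr : 1 ≤ r) (V : Type) [Countable V] [Nonempty V]
    (g : V → Fin r) (hg : ∀ j : Fin r, ∃ v : V, g v = j)
    (a : Hs V →L[ℂ] Hs V) (ha : IsSelfAdjoint a)
    (I : Fin r → (Hs V →L[ℂ] Hs V))
    (hI : ∀ (j : Fin r) (v : V), I j (bas V v) = if g v = j then bas V v else 0) :
    ∀ ε : ℝ, 0 < ε →
      ∃ (ρ : Hs V →L[ℂ] Hs V) (F : Finset V),
        (∀ x : Hs V, 0 ≤ ⟪x, ρ x⟫) ∧
        (∀ v ∉ F, ρ (bas V v) = 0) ∧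
        (∀ j : Fin r, dPart g ρ j = 1 / (r : ℝ)) ∧
        TT ρ a ≥ sInf {t : ℝ | ∃ ζ : Fin r → ℝ, (∑ j : Fin r, ζ j = 0) ∧
          t = lamMax (a + ∑ j : Fin r, (ζ j : ℂ) • I j)} - ε := by
  intro ε hε
  set M := sInf {t : ℝ | ∃ ζ : Fin r → ℝ, (∑ j : Fin r, ζ j = 0) ∧
          t = lamMax (a + ∑ j : Fin r, (ζ j : ℂ) • I j)} with hM
  have hr0 : (0 : ℝ) < r := by exact_mod_cast hr
  -- The shift by `‖a‖` makes `c` positive, so that adding mass to `ρ` never decreases `TT ρ c`.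
  set c : Hs V →L[ℂ] Hs V := a + ((‖a‖ : ℝ) : ℂ) • 1 with hc
  have hcx : ∀ x : Hs V, (⟪x, c x⟫).re = (⟪x, a x⟫).re + ‖a‖ * ‖x‖ ^ 2 := by
    intro x
    have : (⟪x, x⟫).re = ‖x‖ ^ 2 := inner_self_eq_norm_sq (𝕜 := ℂ) x
    simp only [hc, add_apply, smul_apply,
      one_apply_eq_self, inner_add_right, inner_smul_right, Complex.add_re,
      Complex.re_ofReal_mul, this]
  rcases feasible_or_dual c I (fun _ => 1 / (r : ℝ)) (fun _ => by positivity) (M - ε + ‖a‖) with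
    ⟨ρ, hρ, h1, h2⟩ | ⟨y, hy1, hy2⟩
  · -- The deficits `1 / r - TT ρ (I j)` are filled with diagonal mass at one vertex per part.
    choose w hw using hg
    have hP : ∀ j, FS (proj (bas V (w j))) := fun j =>
      FS_proj (Submodule.subset_span ⟨_, rfl⟩)
    set δ : Fin r → ℝ := fun j => 1 / (r : ℝ) - TT ρ (I j) with hδ
    have hδ0 : ∀ j, 0 ≤ δ j := fun j => sub_nonneg.2 (h1 j).le
    set τ : Hs V →L[ℂ] Hs V := ∑ j, (δ j : ℂ) • proj (bas V (w j)) with hτ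
    have hτF : FS τ := FS.sum _ fun j => (hP j).smul (hδ0 j)
    have hτT : ∀ b, TT τ b = ∑ j, δ j * (⟪bas V (w j), b (bas V (w j))⟫).re := by
      intro b
      rw [hτ, TT_sum_left _ (fun j => (hP j).smul (hδ0 j))]
      simp only [TT_smul_left, TT_proj]
    have hd : ∀ j, TT (ρ + τ) (I j) = 1 / (r : ℝ) := by
      intro j
      rw [TT_add_left hρ hτF, hτT]
      have : ∀ k, (⟪bas V (w k), I j (bas V (w k))⟫).re = if k = j then 1 else 0 := by
        intro k
        rw [hI, hw]
        split_ifs <;> simp [norm_bas]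
      simp [this, hδ]
    have hF := hρ.add hτF
    obtain ⟨hpos, F, hFF⟩ := id hF
    refine ⟨ρ + τ, F, fun x => hpos.inner_nonneg_right x, hFF, fun j => ?_, ?_⟩
    · rw [dPart_eq_TT hI, hd]
    · have htr : TT (ρ + τ) 1 = 1 := by
        rw [← sum_I_eq_one hI, TT_sum_right _ hF]
        simp only [hd, Finset.sum_const, Finset.card_univ, Fintype.card_fin, nsmul_eq_mul]
        field_simp
      have e1 : TT (ρ + τ) c = TT (ρ + τ) a + ‖a‖ := by
        rw [hc, TT_add_right hF, TT_smul_right, htr, mul_one]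
      have e2 : 0 ≤ TT τ c := by
        rw [hτT]
        refine Finset.sum_nonneg fun j _ => mul_nonneg (hδ0 j) ?_
        rw [hcx, norm_bas]
        have := (abs_le.1 (abs_re_inner_le a (norm_bas (w j)))).1
        linarith
      rw [TT_add_left hρ hτF] at e1
      linarith
  · -- Centring the multipliers gives an admissible `ζ` whose value lies below the infimum.
    exfalso
    set m : ℝ := (∑ j, y j) / r with hm
    have hζ : ∑ j, (y j - m) = 0 := by
      rw [Finset.sum_sub_distrib]
      simp only [Finset.sum_const, Finset.card_univ, Fintype.card_fin, nsmul_eq_mul, hm]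
      field_simp
      ring
    have hle : M ≤ lamMax (a + ∑ j, ((y j - m : ℝ) : ℂ) • I j) :=
      csInf_le (bddBelow_dual hr hg a hI) ⟨fun j => y j - m, hζ, rfl⟩
    have hB : ∀ x, (⟪x, (c + ∑ j, (y j : ℂ) • I j) x⟫).re ≤ 0 := by
      refine re_inner_nonpos_of_TT _ fun ρ hρ => ?_
      rw [TT_add_right hρ, TT_sum_right _ hρ]
      simp only [TT_smul_right]
      linarith [hy2 ρ hρ]
    have hmy : 0 ≤ m + (M - ε + ‖a‖) := by
      rw [← Finset.sum_mul] at hy1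
      rw [hm, div_eq_mul_one_div]
      exact hy1
    have hup : lamMax (a + ∑ j, ((y j - m : ℝ) : ℂ) • I j) ≤ M - ε := by
      refine csSup_le ⟨_, bas V (Classical.arbitrary V), norm_bas _, rfl⟩ ?_
      rintro t ⟨x, hx, rfl⟩
      have h1 := hB x
      rw [re_inner_add_sum, hcx, hx] at h1
      rw [re_inner_add_sum]
      have hsum : ∑ j, (⟪x, I j x⟫).re = 1 := by
        have := congrArg (fun b : Hs V →L[ℂ] Hs V => (⟪x, b x⟫).re) (sum_I_eq_one hI)
        simpa [inner_sum, sum_apply, hx] using this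
      simp only [sub_mul, Finset.sum_sub_distrib, ← Finset.mul_sum, hsum]
      linarith
    linarith
end
end

section
/- Let ρ̂ be a positive semidefinite matrix in ℂ^{F×F} satisfying Σ_{v ∈ F : g(v) = j} ρ̂_{vv} = 1/r for every j ∈ {1,…,r}. Then there exists a positive semidefinite matrix ρ̃ in ℂ^{F×F} with rank(ρ̃) ≤ r, satisfying Σ_{v ∈ F : g(v) = j} ρ̃_{vv} = 1/r for every j, and with Re(tr(ρ̃ A)) ≥ Re(tr(ρ̂ A)). -/
/-!
Diagonalise `ρhat = U diag(λ) Uᴴ` and keep the eigenvectors fixed, letting the nonnegative weights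
vary. The constraints and the objective are real-linear in the weights, so the problem becomes a
linear programme with `r` equality constraints: `exists_sparse_weights` is the usual argument that
such a programme has a solution supported on at most `r` indices which is at least as good as a
given one. The rank of `U diag(y) Uᴴ` is at most the size of the support of `y`.
The feasible set is bounded because each eigenvector contributes a positive total to the
constraints, so every direction preserving the constraints has a negative coordinate.
-/

/-- A linear programme in standard form whose columns `p i` have positive coordinate sum has,
for each feasible point `x`, a feasible point `y` with at most `r` nonzero coordinates and
at least the same objective value. -/
lemma exists_sparse_weights {r : ℕ} {ι : Type*} [Fintype ι] [DecidableEq ι]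
    (p : ι → Fin r → ℝ) (hp : ∀ i, 0 < ∑ j, p i j) (c : ι → ℝ) (x : ι → ℝ) (hx : ∀ i, 0 ≤ x i) :
    ∃ y : ι → ℝ, (∀ i, 0 ≤ y i) ∧ (Finset.univ.filter (fun i => y i ≠ 0)).card ≤ r ∧
      (∀ j, ∑ i, y i * p i j = ∑ i, x i * p i j) ∧ ∑ i, x i * c i ≤ ∑ i, y i * c i := by
  induction hn : (Finset.univ.filter (fun i => x i ≠ 0)).card using Nat.strong_induction_on
    generalizing x with
  | _ n ih =>
  by_cases hle : n ≤ r
  · exact ⟨x, hx, hn ▸ hle, fun _ => rfl, le_rfl⟩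
  -- A nonzero direction supported in the support of `x` that preserves the constraints.
  obtain ⟨d, hd0, hdp, i₀, hi₀⟩ : ∃ d : ι → ℝ, (∀ i, x i = 0 → d i = 0) ∧
      (∀ j, ∑ i, d i * p i j = 0) ∧ ∃ i, d i ≠ 0 := by
    set s := Finset.univ.filter (fun i => x i ≠ 0) with hs
    have hdep : ¬ LinearIndepOn ℝ p (s : Set ι) := by
      intro h
      have := LinearIndependent.fintype_card_le_finrank h
      simp at this
      omega
    rw [linearIndepOn_finset_iff] at hdep
    push Not at hdep
    obtain ⟨f, hf, i, his, hfi⟩ := hdep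
    refine ⟨fun i => if i ∈ s then f i else 0, ?_, ?_, i, by simp [his, hfi]⟩
    · intro i hi
      simp [hs, hi]
    · intro j
      have := congrFun hf j
      simpa [Finset.sum_apply, ite_mul, Finset.sum_ite_mem] using this
  obtain ⟨d, hd0, hdp, i₀, hi₀, hdc⟩ : ∃ d : ι → ℝ, (∀ i, x i = 0 → d i = 0) ∧
      (∀ j, ∑ i, d i * p i j = 0) ∧ ∃ i, d i ≠ 0 ∧ 0 ≤ ∑ i, d i * c i := by
    rcases le_total 0 (∑ i, d i * c i) with h | h
    · exact ⟨d, hd0, hdp, i₀, hi₀, h⟩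
    · refine ⟨fun i => -d i, fun i hi => by simp [hd0 i hi], fun j => ?_, i₀, by simpa, ?_⟩
      · simp [hdp j]
      · simpa using h
  have hneg : ∃ i, d i < 0 := by
    by_contra! hall
    have h0 : ∑ i, d i * ∑ j, p i j = 0 := by
      simp_rw [Finset.mul_sum]
      rw [Finset.sum_comm]
      simp [hdp]
    rw [Finset.sum_eq_zero_iff_of_nonneg
      (fun i _ => mul_nonneg (hall i) (hp i).le)] at h0
    have := h0 i₀ (Finset.mem_univ _)
    exact (mul_ne_zero hi₀ (hp i₀).ne') this
  -- The largest step along `d` that stays nonnegative kills the coordinate `k`.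
  obtain ⟨k, hk, hmin⟩ := Finset.exists_min_image (Finset.univ.filter (fun i => d i < 0))
    (fun i => x i / (-d i)) (by obtain ⟨i, hi⟩ := hneg; exact ⟨i, by simpa using hi⟩)
  simp only [Finset.mem_filter, Finset.mem_univ, true_and] at hk hmin
  set t := x k / (-d k) with ht
  have ht0 : 0 ≤ t := div_nonneg (hx k) (by linarith)
  have hy0 : ∀ i, 0 ≤ x i + t * d i := by
    intro i
    rcases lt_or_ge (d i) 0 with h | h
    · have := hmin i h
      rw [le_div_iff₀ (by linarith)] at this
      linarith
    · have := hx i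
      positivity
  have hyk : x k + t * d k = 0 := by
    have : d k ≠ 0 := hk.ne
    rw [ht]
    field_simp
    ring
  have hcard : (Finset.univ.filter (fun i => x i + t * d i ≠ 0)).card < n := by
    rw [← hn]
    apply Finset.card_lt_card
    rw [Finset.ssubset_iff_of_subset]
    · refine ⟨k, ?_, by simp [hyk]⟩
      simpa using fun h => hk.ne (hd0 k h)
    · intro i
      simp only [Finset.mem_filter, Finset.mem_univ, true_and]
      intro h h'
      exact h (by simp [h', hd0 i h'])
  obtain ⟨y, h1, h2, h3, h4⟩ := ih _ hcard (fun i => x i + t * d i) hy0 rfl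
  have hlin : ∀ q : ι → ℝ, ∑ i, (x i + t * d i) * q i = ∑ i, x i * q i + t * ∑ i, d i * q i := by
    intro q
    simp only [add_mul, Finset.sum_add_distrib, Finset.mul_sum, mul_assoc]
  refine ⟨y, h1, h2, fun j => ?_, le_trans ?_ h4⟩
  · rw [h3 j, hlin, hdp j, mul_zero, add_zero]
  · rw [hlin]
    have := mul_nonneg ht0 hdc
    linarith

open scoped ComplexOrder

/-- Any feasible PSD solution of the partitioned SDP on a finite index set can be replaced by
a feasible PSD solution of rank at most `r` with at least the same objective value. -/
theorem stmt9 (r : ℕ) (hr : 1 ≤ r) (F : Type) [Fintype F] [DecidableEq F] [Nonempty F]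
    (g : F → Fin r) (A : Matrix F F ℂ) (hA : A.IsHermitian)
    (ρhat : Matrix F F ℂ) (hρhat : ρhat.PosSemidef)
    (hdiag : ∀ j : Fin r,
      ∑ v ∈ Finset.univ.filter (fun v => g v = j), ρhat v v = 1 / (r : ℂ)) :
    ∃ ρtil : Matrix F F ℂ, ρtil.PosSemidef ∧ ρtil.rank ≤ r ∧
      (∀ j : Fin r,
        ∑ v ∈ Finset.univ.filter (fun v => g v = j), ρtil v v = 1 / (r : ℂ)) ∧
      ((ρtil * A).trace).re ≥ ((ρhat * A).trace).re := by
  obtain ⟨U, hU, x, hx, hρ⟩ : ∃ U : Matrix F F ℂ, U.conjTranspose * U = 1 ∧ ∃ x : F → ℝ,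
      (∀ i, 0 ≤ x i) ∧
      ρhat = U * Matrix.diagonal (fun i => (x i : ℂ)) * U.conjTranspose := by
    refine ⟨hρhat.1.eigenvectorUnitary, ?_, hρhat.1.eigenvalues, hρhat.eigenvalues_nonneg, ?_⟩
    · exact Unitary.coe_star_mul_self hρhat.1.eigenvectorUnitary
    · exact hρhat.1.spectral_theorem
  have hd : ∀ (y : F → ℝ) (v : F),
      (U * Matrix.diagonal (fun i => (y i : ℂ)) * U.conjTranspose) v v
        = ((∑ i, y i * Complex.normSq (U v i) : ℝ) : ℂ) := by
    intro y v
    rw [Matrix.mul_apply]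
    push_cast
    refine Finset.sum_congr rfl fun i _ => ?_
    rw [Matrix.mul_diagonal, Matrix.conjTranspose_apply, ← Complex.mul_conj]
    simp only [Complex.star_def]
    ring
  have ht : ∀ y : F → ℝ,
      ((U * Matrix.diagonal (fun i => (y i : ℂ)) * U.conjTranspose * A).trace).re
        = ∑ i, y i * ((U.conjTranspose * A * U) i i).re := by
    intro y
    rw [Matrix.mul_assoc, Matrix.mul_assoc, Matrix.trace_mul_comm, Matrix.mul_assoc,
      Matrix.trace, Complex.re_sum]
    refine Finset.sum_congr rfl fun i _ => ?_
    rw [Matrix.diag_apply, Matrix.diagonal_mul, Complex.re_ofReal_mul]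
  have hs : ∀ (y : F → ℝ) (j : Fin r),
      ∑ v ∈ Finset.univ.filter (fun v => g v = j),
        (U * Matrix.diagonal (fun i => (y i : ℂ)) * U.conjTranspose) v v
      = ((∑ i, y i * ∑ v ∈ Finset.univ.filter (fun v => g v = j),
          Complex.normSq (U v i) : ℝ) : ℂ) := by
    intro y j
    simp_rw [hd, Finset.mul_sum]
    rw [Finset.sum_comm]
    push_cast
    rfl
  -- Summing over all parts gives the squared norm of a column of `U`, which is `1`.
  have hp : ∀ i, 0 < ∑ j : Fin r, ∑ v ∈ Finset.univ.filter (fun v => g v = j),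
      Complex.normSq (U v i) := by
    intro i
    rw [Finset.sum_fiberwise]
    have h1 := congrFun (congrFun hU i) i
    rw [Matrix.mul_apply, Matrix.one_apply_eq] at h1
    have h2 : ((∑ v, Complex.normSq (U v i) : ℝ) : ℂ) = 1 := by
      rw [← h1]
      push_cast
      refine Finset.sum_congr rfl fun v _ => ?_
      rw [Matrix.conjTranspose_apply, ← Complex.mul_conj, mul_comm]
      rfl
    have h3 : (∑ v, Complex.normSq (U v i) : ℝ) = 1 := by exact_mod_cast h2
    rw [h3]
    exact one_pos
  obtain ⟨y, hy0, hyc, hyp, hyo⟩ := exists_sparse_weights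
    (fun i j => ∑ v ∈ Finset.univ.filter (fun v => g v = j), Complex.normSq (U v i)) hp
    (fun i => ((U.conjTranspose * A * U) i i).re) x hx
  refine ⟨U * Matrix.diagonal (fun i => (y i : ℂ)) * U.conjTranspose, ?_, ?_, ?_, ?_⟩
  · apply Matrix.PosSemidef.mul_mul_conjTranspose_same
    exact Matrix.PosSemidef.diagonal fun i => by simpa using hy0 i
  · refine (Matrix.rank_mul_le_left _ _).trans ((Matrix.rank_mul_le_right _ _).trans ?_)
    rw [Matrix.rank_diagonal, Fintype.card_subtype]
    simpa using hyc
  · intro j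
    rw [← hdiag j, hρ, hs, hs, hyp j]
  · rw [hρ, ht, ht]
    exact hyo
end

section
/- Suppose that for all u, v ∈ F and all w ∈ S with u⁻¹wv ≠ 1 one has (U_{u⁻¹wv})_{i,i} = 0. Then Φ_iᴴ A_n Φ_i = A_F, where Φ_iᴴ denotes the conjugate transpose of Φ_i. -/
/-!
Writing `φ_v = U_v e_i`, the matrix `Φ_i` has `(v,t)` column `φ_v ⊗ e_t`. So the `((u,s),(v,t))` entry
of `Φ_iᴴ (U_w ⊗ a(w)) Φ_i` is `⟨U_u e_i, U_w U_v e_i⟩ a(w)_{s,t}`, which equals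
`(U_{u⁻¹wv})_{i,i} a(w)_{s,t}` because `U` is a unitary representation (`Phi_sandwich_apply`).
The diagonal coefficient is `1` if `u⁻¹wv = 1` and vanishes by hypothesis otherwise, so summing
over `w ∈ S` keeps exactly the terms that make up the block of `A_F`.
-/

open Matrix
open scoped Kronecker

noncomputable section

/-- The matrix `A_n = ∑_{w ∈ S} U_w ⊗ a(w)`. -/
def An (G : Type) [Group G] (n r : ℕ)
    (U : G →* Matrix.unitaryGroup (Fin n) ℂ)
    (a : G → Matrix (Fin r) (Fin r) ℂ) (S : Finset G) :
    Matrix (Fin n × Fin r) (Fin n × Fin r) ℂ :=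
  ∑ w ∈ S, (U w : Matrix (Fin n) (Fin n) ℂ) ⊗ₖ a w

/-- The matrix `A_F`, whose `(u,v)` block is `∑ { a(w) : w ∈ S, u⁻¹ w v = 1 }`. -/
def AF (G : Type) [Group G] [DecidableEq G] (r : ℕ)
    (a : G → Matrix (Fin r) (Fin r) ℂ) (S : Finset G) (F : Finset G) :
    Matrix (↥F × Fin r) (↥F × Fin r) ℂ :=
  fun p q => (∑ w ∈ S.filter (fun w => ((p.1 : G))⁻¹ * w * (q.1 : G) = 1), a w) p.2 q.2

/-- The matrix `Φ_i`, with `Φ_i[(k,s),(v,t)] = (U_v)_{k,i}` if `s = t` and `0` otherwise. -/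
def Phi (G : Type) [Group G] (n r : ℕ)
    (U : G →* Matrix.unitaryGroup (Fin n) ℂ) (F : Finset G) (i : Fin n) :
    Matrix (Fin n × Fin r) (↥F × Fin r) ℂ :=
  fun p q => if p.2 = q.2 then (U (q.1 : G) : Matrix (Fin n) (Fin n) ℂ) p.1 i else 0

/-- The contribution of a single group element `w` to `Φ_iᴴ A_n Φ_i`, for any matrix `b` in place of
`a(w)`: compressing by `Φ_i` replaces `U_w` by the matrix coefficient `(U_{u⁻¹wv})_{i,i}`. -/
theorem Phi_sandwich_apply (G : Type) [Group G] (n r : ℕ)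
    (U : G →* Matrix.unitaryGroup (Fin n) ℂ) (b : Matrix (Fin r) (Fin r) ℂ)
    (F : Finset G) (i : Fin n) (w : G) (p q : ↥F × Fin r) :
    ((Phi G n r U F i)ᴴ * ((U w : Matrix (Fin n) (Fin n) ℂ) ⊗ₖ b) * Phi G n r U F i) p q =
      (U ((p.1 : G)⁻¹ * w * (q.1 : G)) : Matrix (Fin n) (Fin n) ℂ) i i * b p.2 q.2 := by
  have hU : (U ((p.1 : G)⁻¹ * w * (q.1 : G)) : Matrix (Fin n) (Fin n) ℂ) =
      (U (p.1 : G) : Matrix (Fin n) (Fin n) ℂ)ᴴ * (U w : Matrix (Fin n) (Fin n) ℂ) *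
        (U (q.1 : G) : Matrix (Fin n) (Fin n) ℂ) := by
    rw [map_mul, map_mul, map_inv]
    rfl
  rw [hU]
  simp only [Matrix.mul_apply, Fintype.sum_prod_type, Phi, conjTranspose_apply, kroneckerMap_apply,
    apply_ite star, star_zero, ite_mul, mul_ite, zero_mul, mul_zero, Finset.sum_ite_eq',
    Finset.mem_univ, if_true, Finset.sum_mul]
  refine Finset.sum_congr rfl fun x _ => Finset.sum_congr rfl fun y _ => ?_
  ring

/-- If `(U_{u⁻¹wv})_{i,i} = 0` whenever `u, v ∈ F`, `w ∈ S` and `u⁻¹wv ≠ 1`,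
then `Φ_iᴴ A_n Φ_i = A_F`. -/
theorem stmt10 (G : Type) [Group G] [DecidableEq G] (n r : ℕ) (hn : 1 ≤ n) (hr : 1 ≤ r)
    (U : G →* Matrix.unitaryGroup (Fin n) ℂ)
    (a : G → Matrix (Fin r) (Fin r) ℂ) (S : Finset G) (hS : ∀ w ∉ S, a w = 0)
    (F : Finset G) (i : Fin n)
    (hi : ∀ u ∈ F, ∀ v ∈ F, ∀ w ∈ S, u⁻¹ * w * v ≠ 1 →
      (U (u⁻¹ * w * v) : Matrix (Fin n) (Fin n) ℂ) i i = 0) :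
    (Phi G n r U F i)ᴴ * An G n r U a S * Phi G n r U F i = AF G r a S F := by
  ext p q
  rw [An, Matrix.mul_sum, Matrix.sum_mul, Matrix.sum_apply]
  simp only [Phi_sandwich_apply, AF, Matrix.sum_apply, Finset.sum_filter]
  refine Finset.sum_congr rfl fun w hw => ?_
  split_ifs with h
  · simp [h]
  · rw [hi _ p.1.2 _ q.1.2 w hw h, zero_mul]
end
end

section
/- Suppose that for all u, v ∈ F and all w ∈ S with u⁻¹wv ≠ 1 one has (U_{u⁻¹wv})_{i,i} = 0. Then for every (|F|·r)×(|F|·r) complex matrix ρ_F, tr((Φ_i ρ_F Φ_iᴴ) · A_n) = tr(ρ_F · A_F), where Φ_iᴴ denotes the conjugate transpose of Φ_i. -/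
/-!
Since `U` is a homomorphism into the unitary group, `(U_u)ᴴ U_w U_v = U_{u⁻¹wv}`. Compressing
`U_w ⊗ a(w)` by `Φ_i` therefore gives the matrix whose `(u,v)` block is `(U_{u⁻¹wv})_{i,i} a(w)`
(`Phi_compress`). Under the hypothesis on the diagonal entries that scalar is `1` if `u⁻¹wv = 1` and
`0` otherwise, so `Φ_iᴴ A_n Φ_i = A_F`, and the equality of traces follows by cyclicity.
-/


open Matrix
open scoped Kronecker

noncomputable section

theorem Phi_compress (G : Type) [Group G] (n r : ℕ)
    (U : G →* Matrix.unitaryGroup (Fin n) ℂ) (b : Matrix (Fin r) (Fin r) ℂ)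
    (F : Finset G) (i : Fin n) (w : G) (p q : ↥F × Fin r) :
    ((Phi G n r U F i)ᴴ * ((U w : Matrix (Fin n) (Fin n) ℂ) ⊗ₖ b) * Phi G n r U F i) p q
      = (U ((p.1 : G)⁻¹ * w * q.1) : Matrix (Fin n) (Fin n) ℂ) i i * b p.2 q.2 := by
  obtain ⟨u, s⟩ := p
  obtain ⟨v, t⟩ := q
  have h : (U ((u : G)⁻¹ * w * v) : Matrix (Fin n) (Fin n) ℂ)
      = (U (u : G) : Matrix (Fin n) (Fin n) ℂ)ᴴ * U w * U (v : G) := by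
    rw [map_mul, map_mul, map_inv]
    rfl
  rw [h]
  simp only [Matrix.mul_apply, Fintype.sum_prod_type, Matrix.conjTranspose_apply, Phi,
    Matrix.kroneckerMap_apply, apply_ite star, star_zero, ite_mul, mul_ite, zero_mul, mul_zero,
    Finset.sum_ite_eq', Finset.mem_univ, if_true, Finset.sum_mul]
  refine Finset.sum_congr rfl fun k _ => Finset.sum_congr rfl fun l _ => ?_
  ring

/-- Under the same no-short-cycles hypothesis, `tr((Φ_i ρ_F Φ_iᴴ) A_n) = tr(ρ_F A_F)`. -/
theorem stmt11 (G : Type) [Group G] [DecidableEq G] (n r : ℕ) (hn : 1 ≤ n) (hr : 1 ≤ r)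
    (U : G →* Matrix.unitaryGroup (Fin n) ℂ)
    (a : G → Matrix (Fin r) (Fin r) ℂ) (S : Finset G) (hS : ∀ w ∉ S, a w = 0)
    (F : Finset G) (i : Fin n)
    (hi : ∀ u ∈ F, ∀ v ∈ F, ∀ w ∈ S, u⁻¹ * w * v ≠ 1 →
      (U (u⁻¹ * w * v) : Matrix (Fin n) (Fin n) ℂ) i i = 0)
    (ρF : Matrix (↥F × Fin r) (↥F × Fin r) ℂ) :
    (Phi G n r U F i * ρF * (Phi G n r U F i)ᴴ * An G n r U a S).trace
      = (ρF * AF G r a S F).trace := by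
  have key : (Phi G n r U F i)ᴴ * An G n r U a S * Phi G n r U F i = AF G r a S F := by
    ext p q
    rw [An, Matrix.mul_sum, Matrix.sum_mul, Matrix.sum_apply, AF, Matrix.sum_apply,
      Finset.sum_filter]
    refine Finset.sum_congr rfl fun w hw => ?_
    rw [Phi_compress]
    split_ifs with h
    · simp [h]
    · rw [hi _ p.1.2 _ q.1.2 w hw h, zero_mul]
  rw [← key, Matrix.mul_assoc, Matrix.mul_assoc, Matrix.trace_mul_comm]
  simp only [Matrix.mul_assoc]
end
end

section
/- Let ρ_F be any (|F|·r)×(|F|·r) complex matrix and define σ = (1/n) Σ_{i=1}^n Φ_i ρ_F Φ_iᴴ, where Φ_iᴴ denotes the conjugate transpose of Φ_i. Suppose j ∈ {1,…,n} satisfies (U_{uv⁻¹})_{j,j} = 0 for all u, v ∈ F with uv⁻¹ ≠ 1. Then the (j,j) block of σ equals (1/n) times the block-trace of ρ_F; that is, for all s, t ∈ {1,…,r}, σ[(j,s),(j,t)] = (1/n) Σ_{u ∈ F} ρ_F[(u,s),(u,t)]. -/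
/-! The `((j,s),(j,t))` entry of `∑_i Φ_i ρ_F Φ_iᴴ` is
`∑_{u,v} (∑_i (U_u)_{j,i} conj (U_v)_{j,i}) ρ_F[(u,s),(v,t)]`. The inner sum is
`(U_u U_vᴴ)_{j,j} = (U_{uv⁻¹})_{j,j}` (`sum_mul_star_eq`), which is `1` for `u = v` and vanishes
for `u ≠ v` by the hypothesis on `j`. So only the block-trace of `ρ_F` survives. -/

open Matrix
open scoped Kronecker

noncomputable section

lemma sum_mul_star_eq {G : Type} [Group G] {n : ℕ} (U : G →* Matrix.unitaryGroup (Fin n) ℂ)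
    (u v : G) (j : Fin n) :
    ∑ i, (U u : Matrix (Fin n) (Fin n) ℂ) j i * star ((U v : Matrix (Fin n) (Fin n) ℂ) j i)
      = (U (u * v⁻¹) : Matrix (Fin n) (Fin n) ℂ) j j := by
  rw [map_mul, map_inv, Matrix.UnitaryGroup.mul_val, Matrix.UnitaryGroup.inv_val, Matrix.mul_apply]
  simp [Matrix.star_apply]

lemma Phi_mul_mul_conjTranspose_apply {G : Type} [Group G] {n r : ℕ}
    (U : G →* Matrix.unitaryGroup (Fin n) ℂ) (F : Finset G)
    (ρF : Matrix (↥F × Fin r) (↥F × Fin r) ℂ) (i j : Fin n) (s t : Fin r) :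
    (Phi G n r U F i * ρF * (Phi G n r U F i)ᴴ) (j, s) (j, t)
      = ∑ v : ↥F, ∑ u : ↥F, (U (u : G) : Matrix (Fin n) (Fin n) ℂ) j i *
          star ((U (v : G) : Matrix (Fin n) (Fin n) ℂ) j i) * ρF (u, s) (v, t) := by
  simp only [Matrix.mul_apply, Matrix.conjTranspose_apply, Phi, Fintype.sum_prod_type, ite_mul,
    zero_mul, apply_ite star, star_zero, mul_ite, mul_zero, Finset.sum_ite_eq, Finset.mem_univ,
    if_true, Finset.sum_mul]
  exact Finset.sum_congr rfl fun v _ => Finset.sum_congr rfl fun u _ => by ring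

/-- If `(U_{uv⁻¹})_{j,j} = 0` for all `u, v ∈ F` with `uv⁻¹ ≠ 1`, then the `(j,j)` block of
`σ = (1/n) ∑_i Φ_i ρ_F Φ_iᴴ` equals `(1/n)` times the block-trace of `ρ_F`. -/
theorem stmt12 (G : Type) [Group G] [DecidableEq G] (n r : ℕ) (hn : 1 ≤ n) (hr : 1 ≤ r)
    (U : G →* Matrix.unitaryGroup (Fin n) ℂ)
    (F : Finset G)
    (ρF : Matrix (↥F × Fin r) (↥F × Fin r) ℂ)
    (j : Fin n)
    (hj : ∀ u ∈ F, ∀ v ∈ F, u * v⁻¹ ≠ 1 →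
      (U (u * v⁻¹) : Matrix (Fin n) (Fin n) ℂ) j j = 0) :
    ∀ s t : Fin r,
      ((n : ℂ)⁻¹ • ∑ i : Fin n, Phi G n r U F i * ρF * (Phi G n r U F i)ᴴ) (j, s) (j, t)
        = (n : ℂ)⁻¹ * ∑ u : ↥F, ρF (u, s) (u, t) := by
  intro s t
  rw [Matrix.smul_apply, Matrix.sum_apply, smul_eq_mul]
  congr 1
  simp only [Phi_mul_mul_conjTranspose_apply]
  rw [Finset.sum_comm]
  refine Finset.sum_congr rfl fun v _ => ?_
  rw [Finset.sum_comm]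
  simp only [← Finset.sum_mul, sum_mul_star_eq]
  rw [Finset.sum_eq_single v]
  · simp
  · intro u _ huv
    rw [hj u u.2 v v.2 fun h => huv (Subtype.ext (mul_inv_eq_one.mp h)), zero_mul]
  · simp
end
end

section
/- Let ρ be a positive semidefinite complex matrix with rows and columns indexed by pairs (v,s) ∈ {1,…,n}×{1,…,r}, satisfying the partition constraints Σ_{v=1}^n ρ[(v,j),(v,j)] = 1/r for every j ∈ {1,…,r}. Let ζ ∈ ℝ^r satisfy ζ_1 + ⋯ + ζ_r = 0. Then Re(tr(ρA)) ≤ λ_max(A + D_ζ), where D_ζ is the diagonal matrix whose ((v,s),(v,s)) entry is ζ_s (note A + D_ζ is again Hermitian). In other words, weak duality PartSdp(A) ≤ PartSdp-Dual(A) holds for the partitioned SDP. -/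
/-!
Adding `D_ζ` does not change the objective on feasible `ρ`: by the partition constraints
`tr(ρ D_ζ) = ∑ j, ζ j * (1 / r) = 0`. The constraints also give `tr ρ = 1`, so
`re_trace_mul_le` bounds `tr(ρ (A + D_ζ))` by the largest eigenvalue: in an eigenbasis of
`A + D_ζ` this trace is the average of the eigenvalues weighted by the diagonal of `ρ`.
-/

open scoped ComplexOrder

/-- The weights are the diagonal entries of `U⋆ ρ U`, where `B = U diag(λ) U⋆`; they are
nonnegative because `ρ` is positive semidefinite, and they sum to `tr ρ`. -/
theorem re_trace_mul_le {m : Type*} [Fintype m] [DecidableEq m] {ρ B : Matrix m m ℂ}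
    (hρ : ρ.PosSemidef) (hB : B.IsHermitian) :
    ((ρ * B).trace).re ≤ (⨆ p, hB.eigenvalues p) * (ρ.trace).re := by
  let U : Matrix m m ℂ := hB.eigenvectorUnitary.1
  set W : Matrix m m ℂ := star U * ρ * U with hW
  have hUU : U * star U = 1 := Unitary.mul_star_self_of_mem hB.eigenvectorUnitary.2
  have hWpsd : W.PosSemidef := hρ.conjTranspose_mul_mul_same U
  have htr : ρ.trace = W.trace := by
    rw [hW, Matrix.trace_mul_comm, ← mul_assoc, hUU, one_mul]
  have htrB : (ρ * B).trace = ∑ p, W p p * (hB.eigenvalues p : ℂ) := by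
    have hspec : B = U * Matrix.diagonal (fun p => (hB.eigenvalues p : ℂ)) * star U := by
      have h := hB.spectral_theorem
      rw [Unitary.conjStarAlgAut_apply] at h
      exact h
    have h : (ρ * B).trace
        = (W * Matrix.diagonal (fun p => (hB.eigenvalues p : ℂ))).trace := by
      conv_lhs => rw [hspec]
      rw [← mul_assoc, Matrix.trace_mul_comm, hW]
      simp only [mul_assoc]
    rw [h]
    simp [Matrix.trace, Matrix.mul_diagonal]
  rw [htrB, htr, Matrix.trace, Complex.re_sum, Complex.re_sum, Finset.mul_sum]
  refine Finset.sum_le_sum fun p _ => ?_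
  have hp : 0 ≤ (W p p).re := (Complex.le_def.1 (hWpsd.diag_nonneg (i := p))).1
  rw [Complex.re_mul_ofReal, mul_comm, Matrix.diag_apply]
  exact mul_le_mul_of_nonneg_right
    (le_ciSup (Set.finite_range hB.eigenvalues).bddAbove p) hp

/-- Weak duality for the partitioned SDP: `PartSdp(A) ≤ PartSdp-Dual(A)`. -/
theorem stmt16 (n r : ℕ) (hn : 1 ≤ n) (hr : 1 ≤ r)
    (A : Matrix (Fin n × Fin r) (Fin n × Fin r) ℂ) (hA : A.IsHermitian)
    (ρ : Matrix (Fin n × Fin r) (Fin n × Fin r) ℂ) (hρ : ρ.PosSemidef)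
    (hpart : ∀ j : Fin r, ∑ v : Fin n, ρ (v, j) (v, j) = 1 / (r : ℂ))
    (ζ : Fin r → ℝ) (hζ : ∑ j : Fin r, ζ j = 0)
    (hB : (A + Matrix.diagonal fun p : Fin n × Fin r => (ζ p.2 : ℂ)).IsHermitian) :
    ((ρ * A).trace).re ≤ ⨆ p : Fin n × Fin r, hB.eigenvalues p := by
  have hr0 : (r : ℂ) ≠ 0 := by exact_mod_cast (by omega : r ≠ 0)
  have htr : ρ.trace = 1 := by
    simp only [Matrix.trace, Matrix.diag_apply]
    rw [Fintype.sum_prod_type_right]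
    simp [hpart, hr0]
  have hD : (ρ * Matrix.diagonal fun p : Fin n × Fin r => (ζ p.2 : ℂ)).trace = 0 := by
    simp only [Matrix.trace, Matrix.diag_apply, Matrix.mul_diagonal]
    rw [Fintype.sum_prod_type_right]
    simp only [← Finset.sum_mul, hpart]
    rw [← Finset.mul_sum, ← Complex.ofReal_sum, hζ, Complex.ofReal_zero, mul_zero]
  have h := re_trace_mul_le hρ hB
  rwa [mul_add, Matrix.trace_add, hD, add_zero, htr, Complex.one_re, mul_one] at h
end
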